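/- Let (u_n) be a sequence of information structures and u an information structure. Then val(u_n, g) → val(u, g) for every payoff function g ∈ 𝒢 (pointwise convergence of values) if and only if d(u_n, u) → 0 (uniform convergence of values over all payoff functions). -/

import Mathlib

open scoped BigOperators ENNReal

namespace ValueDistance

/-- An information structure: a probability distribution on `K × ℕ × ℕ`
(state, signal of player 1, signal of player 2). -/
abbrev InfoStruct (K : Type) := PMF (K × ℕ × ℕ)

/-- A behavior strategy / garbling : a map `ℕ → Δ(ℕ)`. -/
abbrev Garbling : Type := ℕ → PMF ℕ

variable {K : Type}

/-- `g` is a payoff function with action bound `L` : values in `[-1,1]`,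
`g k i j = -1` when `i ≥ L`, and `g k i j = 1` when `i < L` and `j ≥ L`. -/
def IsPayoffL (L : ℕ) (g : K → ℕ → ℕ → ℝ) : Prop :=
  (∀ k i j, g k i j ∈ Set.Icc (-1 : ℝ) 1) ∧
  (∀ k i j, L ≤ i → g k i j = -1) ∧
  (∀ k i j, i < L → L ≤ j → g k i j = 1)

/-- `g` belongs to the set `𝒢` of payoff functions. -/
def IsPayoff (g : K → ℕ → ℕ → ℝ) : Prop := ∃ L, IsPayoffL L g

/-- `g` belongs to the set `𝒢₁` of single-agent (player 1) problems. -/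
def IsPayoff1 (g : K → ℕ → ℕ → ℝ) : Prop :=
  IsPayoff g ∧ ∀ k i j j', g k i j = g k i j'

/-- Expected payoff in the Bayesian game `Γ(u,g)` when player 1 uses the behavior
strategy `σ` and player 2 uses `τ`. -/
noncomputable def payoff (u : InfoStruct K) (g : K → ℕ → ℕ → ℝ)
    (σ τ : Garbling) : ℝ :=
  ∑' (x : K × ℕ × ℕ) (i : ℕ) (j : ℕ),
    (u x).toReal * (σ x.2.1 i).toReal * (τ x.2.2 j).toReal * g x.1 i j

/-- The value `val(u,g)` of the zero-sum Bayesian game `Γ(u,g)`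
(the common value of `sup inf` and `inf sup` of the expected payoff;
we take `sup inf` as the definition). -/
noncomputable def val (u : InfoStruct K) (g : K → ℕ → ℕ → ℝ) : ℝ :=
  ⨆ σ : Garbling, ⨅ τ : Garbling, payoff u g σ τ

/-- Total variation distance `‖u − v‖`. -/
noncomputable def tv {α : Type} (u v : PMF α) : ℝ :=
  ∑' x : α, |(u x).toReal - (v x).toReal|

/-- `q.u` : player 1's signal garbled through `q`. -/
noncomputable def garbleLeft (q : Garbling) (u : InfoStruct K) : InfoStruct K :=
  u.bind (fun x => (q x.2.1).map (fun c => (x.1, c, x.2.2)))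

/-- `u.q` : player 2's signal garbled through `q`. -/
noncomputable def garbleRight (u : InfoStruct K) (q : Garbling) : InfoStruct K :=
  u.bind (fun x => (q x.2.2).map (fun d => (x.1, x.2.1, d)))

/-- The value-based distance `d(u,v) = sup_{g ∈ 𝒢} |val(u,g) − val(v,g)|`. -/
noncomputable def dVal (u v : InfoStruct K) : ℝ :=
  ⨆ g : {g : K → ℕ → ℕ → ℝ // IsPayoff g}, |val u g.1 - val v g.1|

/-- The single-agent distance `d₁(u,v) = sup_{g ∈ 𝒢₁} |val(u,g) − val(v,g)|`. -/
noncomputable def d1 (u v : InfoStruct K) : ℝ :=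
  ⨆ g : {g : K → ℕ → ℕ → ℝ // IsPayoff1 g}, |val u g.1 - val v g.1|

/-- Marginal of an information structure on `K × ℕ` (state, player 1's signal). -/
noncomputable def marg1 (u : InfoStruct K) : PMF (K × ℕ) :=
  u.map (fun x => (x.1, x.2.1))

/-- Garbling of a single-agent information structure:
`(q.w)(k,c) = Σ_s w(k,s)·q(s)({c})`. -/
noncomputable def garble1 (q : Garbling) (w : PMF (K × ℕ)) : PMF (K × ℕ) :=
  w.bind (fun x => (q x.2).map (fun c => (x.1, c)))

/-- Marginal of an information structure on the states. -/
noncomputable def margK (u : InfoStruct K) : PMF K := u.map Prod.fst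

/-- Marginal of an information structure on `K × ℕ` (state, player 2's signal). -/
noncomputable def margKD (u : InfoStruct K) : PMF (K × ℕ) :=
  u.map (fun x => (x.1, x.2.2))

/-- `σ.q` : on signal `c`, draw `c'` according to `q(c)` and play `σ(c')`. -/
noncomputable def compGarble (σ q : Garbling) : Garbling :=
  fun c => (q c).bind σ

/-- `u ∈ 𝒰(L)` : both players' signals are `< L` with probability 1. -/
def InU (L : ℕ) (u : InfoStruct K) : Prop :=
  ∀ x : K × ℕ × ℕ, u x ≠ 0 → x.2.1 < L ∧ x.2.2 < L

/-- `q ∈ 𝒬(L)` : garbling with values supported on `{0,…,L−1}`. -/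
def GarblingIn (L : ℕ) (q : Garbling) : Prop :=
  ∀ n m, q n m ≠ 0 → m < L

/-- The two players' signals are conditionally independent given the state:
`u(k)·u(k,c,d) = u(k,c)·u(k,d)` for all `k, c, d`
(equivalently `u(c,d|k) = u(c|k)·u(d|k)` whenever `u(k) > 0`). -/
def CondIndep (u : InfoStruct K) : Prop :=
  ∀ (k : K) (c d : ℕ),
    (∑' y : ℕ × ℕ, u (k, y)) * u (k, c, d)
      = (∑' d' : ℕ, u (k, c, d')) * (∑' c' : ℕ, u (k, c', d))

end ValueDistance

namespace ValueDistance

noncomputable def Ex {α : Type} (p : PMF α) (f : α → ℝ) : ℝ := ∑' a, (p a).toReal * f a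

lemma summable_toReal' {α : Type} (p : PMF α) : Summable (fun a => (p a).toReal) :=
  ENNReal.summable_toReal p.tsum_coe_ne_top

lemma summable_Ex {α : Type} (p : PMF α) {f : α → ℝ} {C : ℝ} (hf : ∀ a, |f a| ≤ C) :
    Summable (fun a => (p a).toReal * f a) := by
  refine Summable.of_norm_bounded ((summable_toReal' p).mul_right C) ?_
  intro a
  rw [Real.norm_eq_abs, abs_mul, abs_of_nonneg ENNReal.toReal_nonneg]
  exact mul_le_mul_of_nonneg_left (hf a) ENNReal.toReal_nonneg

lemma tsum_toReal' {α : Type} (p : PMF α) : ∑' a, (p a).toReal = 1 := by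
  rw [← ENNReal.tsum_toReal_eq (fun a => p.apply_ne_top a), p.tsum_coe]; rfl

lemma Ex_const {α : Type} (p : PMF α) (c : ℝ) : Ex p (fun _ => c) = c := by
  unfold Ex
  rw [tsum_mul_right, tsum_toReal', one_mul]

lemma Ex_mono {α : Type} (p : PMF α) {f h : α → ℝ} {C D : ℝ} (hf : ∀ a, |f a| ≤ C)
    (hh : ∀ a, |h a| ≤ D) (hfh : ∀ a, f a ≤ h a) : Ex p f ≤ Ex p h :=
  Summable.tsum_le_tsum (fun a => mul_le_mul_of_nonneg_left (hfh a) ENNReal.toReal_nonneg)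
    (summable_Ex p hf) (summable_Ex p hh)

lemma Ex_add {α : Type} (p : PMF α) {f h : α → ℝ} {C D : ℝ} (hf : ∀ a, |f a| ≤ C)
    (hh : ∀ a, |h a| ≤ D) : Ex p (fun a => f a + h a) = Ex p f + Ex p h := by
  unfold Ex
  rw [← Summable.tsum_add (summable_Ex p hf) (summable_Ex p hh)]
  simp_rw [mul_add]

lemma Ex_smul {α : Type} (p : PMF α) (f : α → ℝ) (c : ℝ) :
    Ex p (fun a => c * f a) = c * Ex p f := by
  unfold Ex
  rw [← tsum_mul_left]
  congr 1; funext a; ring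

lemma abs_Ex_le {α : Type} (p : PMF α) {f : α → ℝ} {C : ℝ} (hf : ∀ a, |f a| ≤ C) :
    |Ex p f| ≤ C := by
  rw [abs_le]
  have hC : ∀ a : α, |(fun _ => C : α → ℝ) a| ≤ |C| := fun _ => le_rfl
  have hC' : ∀ a : α, |(fun _ => -C : α → ℝ) a| ≤ |C| := fun _ => by simp
  constructor
  · have := Ex_mono p hC' hf (fun a => (abs_le.1 (hf a)).1)
    rwa [Ex_const] at this
  · have := Ex_mono p hf hC (fun a => (abs_le.1 (hf a)).2)
    rwa [Ex_const] at this

lemma Ex_pure {α : Type} (a : α) (f : α → ℝ) : Ex (PMF.pure a) f = f a := by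
  classical
  unfold Ex
  rw [tsum_eq_single a]
  · simp
  · intro b hb; simp [PMF.pure_apply, hb]

lemma summable_pair {α β : Type} (p : PMF α) (q : α → PMF β) {f : α → β → ℝ} {C : ℝ}
    (hf : ∀ a b, |f a b| ≤ C) :
    Summable (fun z : α × β => (p z.1).toReal * ((q z.1 z.2).toReal * f z.1 z.2)) := by
  have h1 : Summable (fun z : α × β => (p z.1 * q z.1 z.2).toReal) := by
    apply ENNReal.summable_toReal
    rw [ENNReal.tsum_prod (f := fun a b => p a * q a b)]
    simp_rw [ENNReal.tsum_mul_left, PMF.tsum_coe]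
    simp
  refine Summable.of_norm_bounded (h1.mul_right C) ?_
  intro z
  rw [Real.norm_eq_abs, abs_mul, abs_mul, abs_of_nonneg ENNReal.toReal_nonneg,
    abs_of_nonneg ENNReal.toReal_nonneg, ENNReal.toReal_mul, ← mul_assoc]
  exact mul_le_mul_of_nonneg_left (hf _ _) (by positivity)

lemma Ex_bind {α β : Type} (p : PMF α) (q : α → PMF β) {f : β → ℝ} {C : ℝ}
    (hf : ∀ b, |f b| ≤ C) : Ex (p.bind q) f = Ex p (fun a => Ex (q a) f) := by
  unfold Ex
  have h := (summable_pair p q (f := fun _ b => f b) (fun _ b => hf b)).tsum_comm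
    (f := fun a b => (p a).toReal * ((q a b).toReal * f b))
  simp_rw [← tsum_mul_left]
  rw [← h]
  congr 1; funext b
  rw [PMF.bind_apply, ENNReal.tsum_toReal_eq, ← tsum_mul_right]
  · congr 1; funext a; rw [ENNReal.toReal_mul, mul_assoc]
  · intro a; exact ENNReal.mul_ne_top (PMF.apply_ne_top _ _) (PMF.apply_ne_top _ _)

lemma Ex_map {α β : Type} (p : PMF α) (q : α → β) {f : β → ℝ} {C : ℝ}
    (hf : ∀ b, |f b| ≤ C) : Ex (p.map q) f = Ex p (fun a => f (q a)) := by
  unfold PMF.map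
  rw [Ex_bind p _ hf]
  simp [Ex_pure]

lemma Ex_comm {α β : Type} (p : PMF α) (q : PMF β) {f : α → β → ℝ} {C : ℝ}
    (hf : ∀ a b, |f a b| ≤ C) :
    Ex p (fun a => Ex q (fun b => f a b)) = Ex q (fun b => Ex p (fun a => f a b)) := by
  unfold Ex
  have h := (summable_pair p (fun _ => q) hf).tsum_comm
    (f := fun a b => (p a).toReal * ((q b).toReal * f a b))
  simp_rw [← tsum_mul_left]
  rw [← h]
  congr 1; funext b; congr 1; funext a; ring

lemma Ex_le_add {α : Type} (p : PMF α) {f h : α → ℝ} {C D e : ℝ} (hf : ∀ a, |f a| ≤ C)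
    (hh : ∀ a, |h a| ≤ D) (hfh : ∀ a, f a ≤ h a + e) : Ex p f ≤ Ex p h + e := by
  have he : ∀ a : α, |(fun _ => e : α → ℝ) a| ≤ |e| := fun _ => le_rfl
  have h1 : Ex p (fun a => h a + e) = Ex p h + e := by
    rw [Ex_add p hh he, Ex_const]
  rw [← h1]
  exact Ex_mono p hf (D := D + |e|)
    (fun a => (abs_add_le _ _).trans (add_le_add (hh a) le_rfl)) hfh

lemma Ex_le_tail {α : Type} (p : PMF α) {f h : α → ℝ} {e : ℝ} (he : 0 ≤ e)
    (hf : ∀ a, |f a| ≤ 1) (hh : ∀ a, |h a| ≤ 1) (s : α → Prop) [DecidablePred s]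
    (hs : Ex p (fun a => if s a then 1 else 0) ≤ e)
    (hfh : ∀ a, ¬ s a → f a ≤ h a + e) : Ex p f ≤ Ex p h + 3 * e := by
  have hb : ∀ a, |2 * (if s a then (1 : ℝ) else 0)| ≤ 2 := by
    intro a; split_ifs <;> simp
  have h2 : Ex p (fun a => h a + 2 * (if s a then (1 : ℝ) else 0))
      = Ex p h + 2 * Ex p (fun a => if s a then (1 : ℝ) else 0) := by
    rw [Ex_add p hh hb, Ex_smul]
  have := Ex_le_add p (f := f) (h := fun a => h a + 2 * (if s a then (1 : ℝ) else 0)) (e := e)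
    (D := 1 + 2) hf (fun a => (abs_add_le _ _).trans (add_le_add (hh a) (hb a))) (by
      intro a
      by_cases h : s a
      · simp only [h, if_true]
        linarith [(abs_le.1 (hf a)).2, (abs_le.1 (hh a)).1]
      · simp only [h, if_false]
        linarith [hfh a h])
  linarith

lemma exists_tail (u : InfoStruct K) {e : ℝ} (he : 0 < e) : ∃ S : ℕ, 0 < S ∧
    Ex u (fun x => if S ≤ x.2.1 then 1 else 0) ≤ e ∧
    Ex u (fun x => if S ≤ x.2.2 then 1 else 0) ≤ e := by
  classical
  have hs : HasSum (fun x => (u x).toReal) 1 := by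
    rw [← tsum_toReal' u]; exact (summable_toReal' u).hasSum
  obtain ⟨F, hF⟩ := (hs.eventually (lt_mem_nhds (show 1 - e < 1 by linarith))).exists
  have h1 : Ex u (fun x => if x ∈ F then (1 : ℝ) else 0) = ∑ x ∈ F, (u x).toReal := by
    unfold Ex
    rw [tsum_eq_sum (s := F)]
    · apply Finset.sum_congr rfl; intro x hx; simp [hx]
    · intro x hx; simp [hx]
  have key : ∀ (s : (K × ℕ × ℕ) → Prop) [DecidablePred s], (∀ x ∈ F, ¬ s x) →
      Ex u (fun x => if s x then (1 : ℝ) else 0) ≤ e := by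
    intro s _ hsF
    have h2 := Ex_mono u (f := fun x => (if s x then (1 : ℝ) else 0) + (if x ∈ F then 1 else 0))
      (h := fun _ => 1) (C := 2) (D := 1)
      (by intro x; split_ifs <;> norm_num) (by simp) (by
        intro x
        by_cases hx : x ∈ F
        · simp [hx, hsF x hx]
        · simp only [hx, if_false]; split_ifs <;> norm_num)
    rw [Ex_const, Ex_add u (C := 1) (D := 1) (by intro x; split_ifs <;> norm_num)
      (by intro x; split_ifs <;> norm_num), h1] at h2
    linarith
  refine ⟨F.sup (fun x => x.2.1) + F.sup (fun x => x.2.2) + 1, by omega, key _ ?_, key _ ?_⟩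
  · intro x hx
    have := Finset.le_sup (f := fun x : K × ℕ × ℕ => x.2.1) hx
    omega
  · intro x hx
    have := Finset.le_sup (f := fun x : K × ℕ × ℕ => x.2.2) hx
    omega

lemma payoff_eq (u : InfoStruct K) (g : K → ℕ → ℕ → ℝ) (σ τ : Garbling) :
    payoff u g σ τ = Ex u (fun x => Ex (σ x.2.1) (fun i => Ex (τ x.2.2) (fun j => g x.1 i j))) := by
  unfold payoff Ex
  simp_rw [← tsum_mul_left, mul_assoc]

def Bd (g : K → ℕ → ℕ → ℝ) : Prop := ∀ k i j, |g k i j| ≤ 1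

lemma IsPayoff.bd {g : K → ℕ → ℕ → ℝ} (h : IsPayoff g) : Bd g := by
  obtain ⟨L, h, -⟩ := h
  exact fun k i j => abs_le.2 (h k i j)

lemma abs_payoff_le (u : InfoStruct K) {g : K → ℕ → ℕ → ℝ} (hg : Bd g) (σ τ : Garbling) :
    |payoff u g σ τ| ≤ 1 := by
  rw [payoff_eq]
  exact abs_Ex_le _ fun x => abs_Ex_le _ fun i => abs_Ex_le _ fun j => hg _ _ _

noncomputable instance : Nonempty Garbling := ⟨fun _ => PMF.pure 0⟩

lemma inf_le (u : InfoStruct K) {g : K → ℕ → ℕ → ℝ} (hg : Bd g) (σ τ : Garbling) :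
    (⨅ τ : Garbling, payoff u g σ τ) ≤ payoff u g σ τ :=
  ciInf_le ⟨-1, by rintro _ ⟨τ, rfl⟩; exact (abs_le.1 (abs_payoff_le u hg σ τ)).1⟩ τ

lemma val_bdd (u : InfoStruct K) {g : K → ℕ → ℕ → ℝ} (hg : Bd g) :
    BddAbove (Set.range fun σ : Garbling => ⨅ τ : Garbling, payoff u g σ τ) := by
  refine ⟨1, ?_⟩
  rintro _ ⟨σ, rfl⟩
  exact (inf_le u hg σ (Classical.arbitrary _)).trans (abs_le.1 (abs_payoff_le u hg σ _)).2

lemma le_val (u : InfoStruct K) {g : K → ℕ → ℕ → ℝ} (hg : Bd g) {X : ℝ} (σ : Garbling)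
    (h : ∀ τ, X ≤ payoff u g σ τ) : X ≤ val u g :=
  (le_ciInf h).trans (le_ciSup (val_bdd u hg) σ)

lemma exists_opt1 (u : InfoStruct K) {g : K → ℕ → ℕ → ℝ} (hg : Bd g) {e : ℝ} (he : 0 < e) :
    ∃ σ, ∀ τ, val u g - e ≤ payoff u g σ τ := by
  obtain ⟨σ, hσ⟩ := exists_lt_of_lt_ciSup (show val u g - e < ⨆ σ : Garbling, _ by
    change _ < val u g; linarith)
  exact ⟨σ, fun τ => hσ.le.trans (inf_le u hg σ τ)⟩

lemma abs_val_le (u : InfoStruct K) {g : K → ℕ → ℕ → ℝ} (hg : Bd g) : |val u g| ≤ 1 := by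
  rw [abs_le]
  constructor
  · exact le_val u hg (Classical.arbitrary _) fun τ => (abs_le.1 (abs_payoff_le u hg _ τ)).1
  · exact ciSup_le fun σ => (inf_le u hg σ (Classical.arbitrary _)).trans
      (abs_le.1 (abs_payoff_le u hg σ _)).2

section Minimax

variable {L : ℕ}

def strat (L : ℕ) : Set (ℕ → Fin L → ℝ) := {t | ∀ n, t n ∈ stdSimplex ℝ (Fin L)}

noncomputable def vec (T : ℕ → PMF (Fin L)) : ℕ → Fin L → ℝ := fun n i => (T n i).toReal

lemma vec_mem (T : ℕ → PMF (Fin L)) : vec T ∈ strat L := by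
  intro n
  refine ⟨fun i => ENNReal.toReal_nonneg, ?_⟩
  have := tsum_toReal' (T n)
  rwa [tsum_fintype] at this

lemma exists_vec {t : ℕ → Fin L → ℝ} (ht : t ∈ strat L) : ∃ T, t = vec T := by
  have h : ∀ n, ∑ i, ENNReal.ofReal (t n i) = 1 := by
    intro n
    rw [← ENNReal.ofReal_sum_of_nonneg (fun i _ => (ht n).1 i), (ht n).2, ENNReal.ofReal_one]
  refine ⟨fun n => PMF.ofFintype (fun i => ENNReal.ofReal (t n i)) (h n), ?_⟩
  funext n i
  simp [vec, ENNReal.toReal_ofReal ((ht n).1 i)]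

noncomputable def inn (g : K → ℕ → ℕ → ℝ) (t s : ℕ → Fin L → ℝ) (x : K × ℕ × ℕ) : ℝ :=
  ∑ i, s x.2.1 i * ∑ j, t x.2.2 j * g x.1 (i : ℕ) (j : ℕ)

lemma inn_vec (g : K → ℕ → ℕ → ℝ) (T S : ℕ → PMF (Fin L)) (x : K × ℕ × ℕ) :
    inn g (vec T) (vec S) x =
      Ex (S x.2.1) (fun i => Ex (T x.2.2) (fun j => g x.1 (i : ℕ) (j : ℕ))) := by
  simp [inn, vec, Ex, tsum_fintype]

lemma abs_inn {g : K → ℕ → ℕ → ℝ} (hg : Bd g) {t s : ℕ → Fin L → ℝ} (ht : t ∈ strat L)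
    (hs : s ∈ strat L) (x : K × ℕ × ℕ) : |inn g t s x| ≤ 1 := by
  obtain ⟨T, rfl⟩ := exists_vec ht
  obtain ⟨S, rfl⟩ := exists_vec hs
  rw [inn_vec]
  exact abs_Ex_le _ fun i => abs_Ex_le _ fun j => hg _ _ _

lemma strat_convex : Convex ℝ (strat L) := by
  intro t ht s hs a b ha hb hab n
  exact convex_stdSimplex ℝ (Fin L) (ht n) (hs n) ha hb hab

lemma strat_compact : IsCompact (strat L) := by
  have : strat L = Set.pi Set.univ (fun _ : ℕ => stdSimplex ℝ (Fin L)) := by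
    ext t; simp [strat]
  rw [this]
  exact isCompact_univ_pi fun _ => isCompact_stdSimplex ℝ (Fin L)

lemma inn_left (g : K → ℕ → ℕ → ℝ) (t₁ t₂ s : ℕ → Fin L → ℝ) (a b : ℝ) (x : K × ℕ × ℕ) :
    inn g (a • t₁ + b • t₂) s x = a * inn g t₁ s x + b * inn g t₂ s x := by
  simp only [inn, Pi.add_apply, Pi.smul_apply, smul_eq_mul, Finset.mul_sum,
    ← Finset.sum_add_distrib]
  refine Finset.sum_congr rfl fun i _ => Finset.sum_congr rfl fun j _ => ?_
  ring

lemma inn_right (g : K → ℕ → ℕ → ℝ) (t s₁ s₂ : ℕ → Fin L → ℝ) (a b : ℝ) (x : K × ℕ × ℕ) :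
    inn g t (a • s₁ + b • s₂) x = a * inn g t s₁ x + b * inn g t s₂ x := by
  simp only [inn, Pi.add_apply, Pi.smul_apply, smul_eq_mul, Finset.mul_sum,
    ← Finset.sum_add_distrib]
  refine Finset.sum_congr rfl fun i _ => Finset.sum_congr rfl fun j _ => ?_
  ring

lemma Ex_comb {α : Type} (p : PMF α) {f h : α → ℝ} (a b : ℝ) (hf : ∀ x, |f x| ≤ 1)
    (hh : ∀ x, |h x| ≤ 1) : Ex p (fun x => a * f x + b * h x) = a * Ex p f + b * Ex p h := by
  rw [Ex_add p (C := |a|) (D := |b|), Ex_smul, Ex_smul]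
  · intro x; rw [abs_mul]; exact mul_le_of_le_one_right (abs_nonneg _) (hf x)
  · intro x; rw [abs_mul]; exact mul_le_of_le_one_right (abs_nonneg _) (hh x)

lemma saddle (hL : 0 < L) (u : InfoStruct K) {g : K → ℕ → ℕ → ℝ} (hg : Bd g) :
    ∃ t ∈ strat L, ∃ s ∈ strat L,
      IsSaddlePointOn (strat L) (strat L) (fun t s => Ex u (inn g t s)) t s := by
  have hne : (strat L).Nonempty := ⟨_, vec_mem (fun _ => PMF.pure ⟨0, hL⟩)⟩
  refine Sion.exists_isSaddlePointOn hne strat_convex strat_compact ?_ ?_ strat_convex hne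
    strat_compact ?_ ?_
  · intro s hs
    apply ContinuousOn.lowerSemicontinuousOn
    refine continuousOn_tsum (u := fun x => (u x).toReal) ?_ (summable_toReal' u) ?_
    · intro x; apply Continuous.continuousOn; unfold inn; fun_prop
    · intro x t ht
      rw [Real.norm_eq_abs, abs_mul, abs_of_nonneg ENNReal.toReal_nonneg]
      exact mul_le_of_le_one_right ENNReal.toReal_nonneg (abs_inn hg ht hs x)
  · intro s hs
    apply ConvexOn.quasiconvexOn
    refine ⟨strat_convex, fun t₁ h₁ t₂ h₂ a b _ _ _ => le_of_eq ?_⟩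
    have : inn g (a • t₁ + b • t₂) s = fun x => a * inn g t₁ s x + b * inn g t₂ s x :=
      funext (inn_left g t₁ t₂ s a b)
    simp only [this, smul_eq_mul]
    exact Ex_comb u a b (abs_inn hg h₁ hs) (abs_inn hg h₂ hs)
  · intro t ht
    apply ContinuousOn.upperSemicontinuousOn
    refine continuousOn_tsum (u := fun x => (u x).toReal) ?_ (summable_toReal' u) ?_
    · intro x; apply Continuous.continuousOn; unfold inn; fun_prop
    · intro x s hs
      rw [Real.norm_eq_abs, abs_mul, abs_of_nonneg ENNReal.toReal_nonneg]
      exact mul_le_of_le_one_right ENNReal.toReal_nonneg (abs_inn hg ht hs x)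
  · intro t ht
    apply ConcaveOn.quasiconcaveOn
    refine ⟨strat_convex, fun s₁ h₁ s₂ h₂ a b _ _ _ => ge_of_eq ?_⟩
    have : inn g t (a • s₁ + b • s₂) = fun x => a * inn g t s₁ x + b * inn g t s₂ x :=
      funext (inn_right g t s₁ s₂ a b)
    simp only [this, smul_eq_mul]
    exact Ex_comb u a b (abs_inn hg ht h₁) (abs_inn hg ht h₂)

end Minimax

lemma minimax (u : InfoStruct K) {g : K → ℕ → ℕ → ℝ} (hp : IsPayoff g) :
    ∃ τ, ∀ σ, payoff u g σ τ ≤ val u g := by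
  have hg := hp.bd
  obtain ⟨L, -, hg1, hg2⟩ := hp
  rcases Nat.eq_zero_or_pos L with rfl | hL
  · refine ⟨fun _ => PMF.pure 0, fun σ => le_val u hg σ fun τ => le_of_eq ?_⟩
    have : g = fun _ _ _ => -1 := by funext k i j; exact hg1 k i j (Nat.zero_le _)
    simp [payoff_eq, this, Ex_const]
  obtain ⟨t, ht, s, hs, h⟩ := saddle hL u hg
  obtain ⟨T, rfl⟩ := exists_vec ht
  obtain ⟨S, rfl⟩ := exists_vec hs
  let r : ℕ → Fin L := fun i => if h : i < L then ⟨i, h⟩ else ⟨0, hL⟩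
  have hr1 : ∀ k i j, g k i j ≤ g k (r i) j := by
    intro k i j
    by_cases hi : i < L
    · simp [r, hi]
    · rw [hg1 k i j (not_lt.1 hi)]; exact (abs_le.1 (hg _ _ _)).1
  have hr2 : ∀ k i j, g k i (r j) ≤ g k i j := by
    intro k i j
    by_cases hi : i < L
    · by_cases hj : j < L
      · simp [r, hj]
      · rw [hg2 k i j hi (not_lt.1 hj)]; exact (abs_le.1 (hg _ _ _)).2
    · rw [hg1 k i j (not_lt.1 hi), hg1 k i _ (not_lt.1 hi)]
  refine ⟨fun n => (T n).map Fin.val, fun σ => le_val u hg (fun n => (S n).map Fin.val) fun τ => ?_⟩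
  have h0 := h (vec fun n => (τ n).map r) (vec_mem _) (vec fun n => (σ n).map r) (vec_mem _)
  have e1 : ∀ A B : ℕ → PMF (Fin L), inn g (vec A) (vec B) =
      fun x => Ex (B x.2.1) (fun i => Ex (A x.2.2) (fun j => g x.1 (i : ℕ) (j : ℕ))) :=
    fun A B => funext (inn_vec g A B)
  simp only [e1] at h0
  rw [payoff_eq, payoff_eq]
  refine le_trans ?_ (h0.trans ?_)
  · refine Ex_mono _ (C := 1) (D := 1) (fun x => abs_Ex_le _ fun i => abs_Ex_le _ fun j => hg _ _ _)
      (fun x => abs_Ex_le _ fun i => abs_Ex_le _ fun j => hg _ _ _) fun x => ?_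
    rw [Ex_map _ r (C := 1) (fun i => abs_Ex_le _ fun j => hg _ _ _)]
    refine Ex_mono _ (C := 1) (D := 1) (fun i => abs_Ex_le _ fun j => hg _ _ _)
      (fun i => abs_Ex_le _ fun j => hg _ _ _) fun i => ?_
    rw [Ex_map _ _ (C := 1) (fun j => hg _ _ _)]
    exact Ex_mono _ (C := 1) (D := 1) (fun j => hg _ _ _) (fun j => hg _ _ _) fun j => hr1 _ _ _
  · refine Ex_mono _ (C := 1) (D := 1) (fun x => abs_Ex_le _ fun i => abs_Ex_le _ fun j => hg _ _ _)
      (fun x => abs_Ex_le _ fun i => abs_Ex_le _ fun j => hg _ _ _) fun x => ?_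
    rw [Ex_map _ _ (C := 1) (fun i => abs_Ex_le _ fun j => hg _ _ _)]
    refine Ex_mono _ (C := 1) (D := 1) (fun i => abs_Ex_le _ fun j => hg _ _ _)
      (fun i => abs_Ex_le _ fun j => hg _ _ _) fun i => ?_
    rw [Ex_map _ r (C := 1) (fun j => hg _ _ _)]
    exact Ex_mono _ (C := 1) (D := 1) (fun j => hg _ _ _) (fun j => hg _ _ _) fun j => hr2 _ _ _

lemma exists_grid {e : ℝ} (he : 0 < e) : ∃ (N : ℕ) (r : Fin N → ℝ), (∀ m, |r m| ≤ 1) ∧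
    ∀ w : ℝ, |w| ≤ 1 → ∃ m, |r m - w| ≤ e := by
  obtain ⟨t, hts, htf, hcov⟩ := (isCompact_Icc (a := (-1 : ℝ)) (b := 1)).finite_cover_balls he
  have := htf.fintype
  let en := Fintype.equivFin t
  refine ⟨Fintype.card t, fun m => (en.symm m : ℝ), fun m => abs_le.2 (hts (en.symm m).2), ?_⟩
  intro w hw
  obtain ⟨x, hx, hwx⟩ := Set.mem_iUnion₂.1 (hcov (abs_le.1 hw))
  refine ⟨en ⟨x, hx⟩, ?_⟩
  beta_reduce
  rw [Equiv.symm_apply_apply, abs_sub_comm]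
  exact (Metric.mem_ball.1 hwx).le

lemma quantize [Fintype K] (S : ℕ) {e : ℝ} (he : 0 < e) :
    ∃ L : ℕ, S ≤ L ∧ ∃ 𝓗 : Set (ℕ → K → ℕ → ℝ), 𝓗.Finite ∧ (∀ H ∈ 𝓗, Bd fun k i j => H i k j) ∧
      ∀ w : ℕ → K → ℕ → ℝ, (∀ j k l, |w j k l| ≤ 1) → ∃ H ∈ 𝓗, ∃ χ ψ : ℕ → ℕ,
        (∀ j, χ j < L) ∧ (∀ j k l, l < S → |H (χ j) k l - w j k l| ≤ e) ∧
        (∀ m k l, m < L → l < S → |H m k l - w (ψ m) k l| ≤ e) := by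
  classical
  obtain ⟨N, r, hr1, hr2⟩ := exists_grid he
  let W := K → Fin S → Fin N
  let L := S + Fintype.card W
  let mk : (Fin L → W) → (ℕ → K → ℕ → ℝ) := fun b m k l =>
    if h : m < L ∧ l < S then r (b ⟨m, h.1⟩ k ⟨l, h.2⟩) else 0
  refine ⟨L, Nat.le_add_right _ _, Set.range mk, Set.finite_range mk, ?_, ?_⟩
  · rintro _ ⟨b, rfl⟩ k i j
    dsimp only [mk]
    split_ifs
    · exact hr1 _
    · simp
  intro w hw
  choose q hq using hr2
  let φ : ℕ → W := fun j k l => q (w j k l) (hw _ _ _)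
  -- enumerate the range of φ by `Fin L`
  let en := Fintype.equivFin W
  let b : Fin L → W := fun m =>
    if h : m.1 < Fintype.card W then
      (if en.symm ⟨m.1, h⟩ ∈ Set.range φ then en.symm ⟨m.1, h⟩ else φ 0) else φ 0
  have hb : ∀ m, ∃ j, φ j = b m := by
    intro m
    dsimp only [b]
    split_ifs with h1 h2
    · exact h2
    · exact ⟨0, rfl⟩
    · exact ⟨0, rfl⟩
  have hφ : ∀ j, ∃ m : Fin L, b m = φ j := by
    intro j
    refine ⟨⟨(en (φ j)).1, lt_of_lt_of_le (en (φ j)).2 (Nat.le_add_left _ _)⟩, ?_⟩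
    simp [b]
  choose ψ hψ using hb
  choose χ hχ using hφ
  refine ⟨mk b, ⟨b, rfl⟩, fun j => χ j, fun m => if h : m < L then ψ ⟨m, h⟩ else 0,
    fun j => (χ j).2, ?_, ?_⟩
  · intro j k l hl
    have : mk b (χ j) k l = r (φ j k ⟨l, hl⟩) := by
      simp only [mk]
      rw [dif_pos ⟨(χ j).2, hl⟩, Fin.eta, hχ]
    rw [this]
    exact hq _ _
  · intro m k l hm hl
    have : mk b m k l = r (φ (ψ ⟨m, hm⟩) k ⟨l, hl⟩) := by
      simp only [mk]
      rw [dif_pos ⟨hm, hl⟩, hψ]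
    beta_reduce
    rw [this, dif_pos hm]
    exact hq _ _

def cl (S i : ℕ) : ℕ := if i < S then i else 0

lemma cl_lt {S : ℕ} (hS : 0 < S) (i : ℕ) : cl S i < S := by
  unfold cl; split_ifs <;> assumption

lemma cl_eq {S i : ℕ} (h : ¬ S ≤ i) : cl S i = i := by
  unfold cl; rw [if_pos (not_le.1 h)]

noncomputable def GA (S L : ℕ) (H : ℕ → K → ℕ → ℝ) : K → ℕ → ℕ → ℝ := fun k i j =>
  if L ≤ i then -1 else if L ≤ j then 1 else H j k (cl S i)

noncomputable def GB (S L : ℕ) (H : ℕ → K → ℕ → ℝ) : K → ℕ → ℕ → ℝ := fun k i j =>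
  if L ≤ i then -1 else if L ≤ j then 1 else H i k (cl S j)

lemma GA_payoff (S L : ℕ) {H : ℕ → K → ℕ → ℝ} (hH : Bd fun k i j => H i k j) :
    IsPayoff (GA S L H) := by
  refine ⟨L, ?_, ?_, ?_⟩
  · intro k i j; rw [Set.mem_Icc, ← abs_le]; unfold GA; split_ifs
    · simp
    · simp
    · exact hH _ _ _
  · intro k i j h; simp [GA, h]
  · intro k i j h h'; simp [GA, h', not_le.2 h]

lemma GB_payoff (S L : ℕ) {H : ℕ → K → ℕ → ℝ} (hH : Bd fun k i j => H i k j) :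
    IsPayoff (GB S L H) := by
  refine ⟨L, ?_, ?_, ?_⟩
  · intro k i j; rw [Set.mem_Icc, ← abs_le]; unfold GB; split_ifs
    · simp
    · simp
    · exact hH _ _ _
  · intro k i j h; simp [GB, h]
  · intro k i j h h'; simp [GB, h', not_le.2 h]

lemma stepA (u v : InfoStruct K) {g : K → ℕ → ℕ → ℝ} (hg : Bd g) {S L : ℕ} (hS : 0 < S)
    (hSL : S ≤ L) {e : ℝ} (he : 0 < e)
    (htail : Ex u (fun x => if S ≤ x.2.1 then 1 else 0) ≤ e)
    {H : ℕ → K → ℕ → ℝ} (hH : Bd fun k i j => H i k j) (σs : Garbling)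
    (hσs : ∀ τ, val u g - e ≤ payoff u g σs τ)
    (χ ψ : ℕ → ℕ) (hχ : ∀ j, χ j < L)
    (h1 : ∀ j k l, l < S → |H (χ j) k l - Ex (σs l) (fun i => g k i j)| ≤ e)
    (h2 : ∀ m k l, m < L → l < S → |H m k l - Ex (σs l) (fun i => g k i (ψ m))| ≤ e)
    (hv : val u (GA S L H) - e ≤ val v (GA S L H)) (τ : Garbling) :
    ∃ σ, val u g - 7 * e ≤ payoff v g σ τ := by
  have hG := (GA_payoff S L hH).bd
  set G := GA S L H with hGdef
  have hw : ∀ l k j, |Ex (σs l) (fun i => g k i j)| ≤ 1 := fun l k j =>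
    abs_Ex_le _ fun i => hg _ _ _
  -- value of `G` at `u`
  have hu : val u g - 4 * e ≤ val u G := by
    refine le_val u hG (fun c => PMF.pure (cl S c)) fun τ' => ?_
    have hopt := hσs (fun d => (τ' d).map ψ)
    have : payoff u g σs (fun d => (τ' d).map ψ) ≤
        payoff u G (fun c => PMF.pure (cl S c)) τ' + 3 * e := by
      rw [payoff_eq, payoff_eq]
      refine Ex_le_tail u he.le (fun x => abs_Ex_le _ fun i => abs_Ex_le _ fun j => hg _ _ _)
        (fun x => abs_Ex_le _ fun i => abs_Ex_le _ fun j => hG _ _ _) (fun x => S ≤ x.2.1) htail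
        fun x hx => ?_
      rw [Ex_pure, Ex_comm _ _ (C := 1) (fun i j => hg _ _ _),
        Ex_map _ ψ (C := 1) (fun j => hw _ _ _)]
      refine Ex_le_add _ (C := 1) (D := 1) (fun j => hw _ _ _) (fun j => hG _ _ _) fun m => ?_
      rw [cl_eq hx]
      have hxL : ¬ L ≤ x.2.1 := by omega
      simp only [hGdef, GA, hxL, if_false]
      split_ifs with hm
      · linarith [(abs_le.1 (hw x.2.1 x.1 (ψ m))).2]
      · rw [cl_eq hx]
        linarith [(abs_le.1 (h2 m x.1 x.2.1 (by omega) (by omega))).1]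
    linarith
  obtain ⟨q, hq⟩ := exists_opt1 v hG he
  have hq' := hq (fun d => (τ d).map χ)
  refine ⟨fun c => (q c).bind (fun i => σs (cl S i)), ?_⟩
  have : payoff v G q (fun d => (τ d).map χ) ≤
      payoff v g (fun c => (q c).bind (fun i => σs (cl S i))) τ + e := by
    rw [payoff_eq, payoff_eq]
    refine Ex_le_add _ (C := 1) (D := 1) (fun x => abs_Ex_le _ fun i => abs_Ex_le _ fun j => hG _ _ _)
      (fun x => abs_Ex_le _ fun i => abs_Ex_le _ fun j => hg _ _ _) fun x => ?_
    rw [Ex_bind _ _ (C := 1) (fun i => abs_Ex_le _ fun j => hg _ _ _)]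
    refine Ex_le_add _ (C := 1) (D := 1) (fun i => abs_Ex_le _ fun j => hG _ _ _)
      (fun i => abs_Ex_le _ fun i => abs_Ex_le _ fun j => hg _ _ _) fun i => ?_
    rw [Ex_comm _ _ (C := 1) (fun i j => hg _ _ _), Ex_map _ χ (C := 1) (fun j => hG _ _ _)]
    refine Ex_le_add _ (C := 1) (D := 1) (fun j => hG _ _ _) (fun j => hw _ _ _) fun j => ?_
    simp only [hGdef, GA, not_le.2 (hχ j), if_false]
    split_ifs with hi
    · linarith [(abs_le.1 (hw (cl S i) x.1 j)).1]
    · linarith [(abs_le.1 (h1 j x.1 (cl S i) (cl_lt hS i))).2]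
  linarith

lemma stepB (u v : InfoStruct K) {g : K → ℕ → ℕ → ℝ} (hg : Bd g) {S L : ℕ} (hS : 0 < S)
    (hSL : S ≤ L) {e : ℝ} (he : 0 < e)
    (htail : Ex u (fun x => if S ≤ x.2.2 then 1 else 0) ≤ e)
    {H : ℕ → K → ℕ → ℝ} (hH : Bd fun k i j => H i k j) (τs : Garbling)
    (hτs : ∀ σ, payoff u g σ τs ≤ val u g)
    (χ ψ : ℕ → ℕ) (hχ : ∀ j, χ j < L)
    (h1 : ∀ i k l, l < S → |H (χ i) k l - Ex (τs l) (fun j => g k i j)| ≤ e)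
    (h2 : ∀ m k l, m < L → l < S → |H m k l - Ex (τs l) (fun j => g k (ψ m) j)| ≤ e)
    (hv : val v (GB S L H) ≤ val u (GB S L H) + e) (σ : Garbling) :
    ∃ τ, payoff v g σ τ ≤ val u g + 6 * e := by
  have hG := (GB_payoff S L hH).bd
  have hGp := GB_payoff S L hH
  set G := GB S L H with hGdef
  have hw : ∀ l k i, |Ex (τs l) (fun j => g k i j)| ≤ 1 := fun l k j =>
    abs_Ex_le _ fun i => hg _ _ _
  -- value of `G` at `u`
  have hu : val u G ≤ val u g + 4 * e := by
    obtain ⟨σ', hσ'⟩ := exists_opt1 u hG he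
    have h0 := hσ' (fun d => PMF.pure (cl S d))
    have hopt := hτs (fun d => (σ' d).map ψ)
    have : payoff u G σ' (fun d => PMF.pure (cl S d)) ≤
        payoff u g (fun d => (σ' d).map ψ) τs + 3 * e := by
      rw [payoff_eq, payoff_eq]
      refine Ex_le_tail u he.le (fun x => abs_Ex_le _ fun i => abs_Ex_le _ fun j => hG _ _ _)
        (fun x => abs_Ex_le _ fun i => abs_Ex_le _ fun j => hg _ _ _) (fun x => S ≤ x.2.2) htail
        fun x hx => ?_
      rw [Ex_map _ ψ (C := 1) (fun j => hw _ _ _)]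
      refine Ex_le_add _ (C := 1) (D := 1) (fun i => abs_Ex_le _ fun j => hG _ _ _)
        (fun j => hw _ _ _) fun m => ?_
      rw [Ex_pure, cl_eq hx]
      have hxL : ¬ L ≤ x.2.2 := by omega
      simp only [hGdef, GB, hxL, if_false]
      split_ifs with hm
      · linarith [(abs_le.1 (hw x.2.2 x.1 (ψ m))).1]
      · rw [cl_eq hx]
        linarith [(abs_le.1 (h2 m x.1 x.2.2 (by omega) (by omega))).2]
    linarith
  obtain ⟨q, hq⟩ := minimax v hGp
  have hq' := hq (fun d => (σ d).map χ)
  refine ⟨fun c => (q c).bind (fun i => τs (cl S i)), ?_⟩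
  have : payoff v g σ (fun c => (q c).bind (fun i => τs (cl S i))) ≤
      payoff v G (fun d => (σ d).map χ) q + e := by
    rw [payoff_eq, payoff_eq]
    refine Ex_le_add _ (C := 1) (D := 1) (fun x => abs_Ex_le _ fun i => abs_Ex_le _ fun j => hg _ _ _)
      (fun x => abs_Ex_le _ fun i => abs_Ex_le _ fun j => hG _ _ _) fun x => ?_
    rw [Ex_map _ χ (C := 1) (fun i => abs_Ex_le _ fun j => hG _ _ _)]
    refine Ex_le_add _ (C := 1) (D := 1) (fun i => abs_Ex_le _ fun j => hg _ _ _)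
      (fun i => abs_Ex_le _ fun j => hG _ _ _) fun i => ?_
    rw [Ex_bind _ _ (C := 1) (fun j => hg _ _ _)]
    refine Ex_le_add _ (C := 1) (D := 1) (fun j => hw _ _ _) (fun j => hG _ _ _) fun j => ?_
    simp only [hGdef, GB, not_le.2 (hχ i), if_false]
    split_ifs with hi
    · linarith [(abs_le.1 (hw (cl S j) x.1 i)).2]
    · linarith [(abs_le.1 (h1 i x.1 (cl S j) (cl_lt hS j))).1]
  linarith

lemma uniform [Fintype K] (u : ℕ → InfoStruct K) (ulim : InfoStruct K)
    (h : ∀ g : K → ℕ → ℕ → ℝ, IsPayoff g →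
        Filter.Tendsto (fun n => val (u n) g) Filter.atTop (nhds (val ulim g)))
    {e : ℝ} (he : 0 < e) : ∀ᶠ n in Filter.atTop, ∀ g : K → ℕ → ℕ → ℝ, IsPayoff g →
      |val (u n) g - val ulim g| ≤ 7 * e := by
  obtain ⟨S, hS, ht1, ht2⟩ := exists_tail ulim he
  obtain ⟨L, hSL, 𝓗, hfin, hbd, hquant⟩ := quantize (K := K) S he
  have hev : ∀ G : K → ℕ → ℕ → ℝ, IsPayoff G →
      ∀ᶠ n in Filter.atTop, |val (u n) G - val ulim G| < e := by
    intro G hG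
    exact (Metric.tendsto_nhds.1 (h G hG) e he)
  have hA : ∀ᶠ n in Filter.atTop, ∀ H ∈ 𝓗,
      |val (u n) (GA S L H) - val ulim (GA S L H)| < e :=
    (Filter.eventually_all_finite hfin).2 fun H hH => hev _ (GA_payoff S L (hbd H hH))
  have hB : ∀ᶠ n in Filter.atTop, ∀ H ∈ 𝓗,
      |val (u n) (GB S L H) - val ulim (GB S L H)| < e :=
    (Filter.eventually_all_finite hfin).2 fun H hH => hev _ (GB_payoff S L (hbd H hH))
  filter_upwards [hA, hB] with n hA hB g hgp
  have hg := hgp.bd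
  rw [abs_le]
  constructor
  · obtain ⟨σs, hσs⟩ := exists_opt1 ulim hg he
    obtain ⟨H, hH, χ, ψ, hχ, h1, h2⟩ := hquant (fun j k l => Ex (σs l) (fun i => g k i j))
      (fun j k l => abs_Ex_le _ fun i => hg _ _ _)
    obtain ⟨τ, hτ⟩ := minimax (u n) hgp
    obtain ⟨σ, hσ⟩ := stepA ulim (u n) hg hS hSL he ht1 (hbd H hH) σs hσs χ ψ hχ h1 h2
      (by linarith [(abs_lt.1 (hA H hH)).1]) τ
    linarith [hτ σ]
  · obtain ⟨τs, hτs⟩ := minimax ulim hgp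
    obtain ⟨H, hH, χ, ψ, hχ, h1, h2⟩ := hquant (fun i k l => Ex (τs l) (fun j => g k i j))
      (fun j k l => abs_Ex_le _ fun i => hg _ _ _)
    obtain ⟨σ, hσ⟩ := exists_opt1 (u n) hg he
    obtain ⟨τ, hτ⟩ := stepB ulim (u n) hg hS hSL he ht2 (hbd H hH) τs hτs χ ψ hχ h1 h2
      (by linarith [(abs_lt.1 (hB H hH)).2]) σ
    linarith [hσ τ]

/-- Pointwise convergence of values over all payoff functions is equivalent
to convergence in the value-based distance. -/
theorem pointwise_iff_value_dist (K : Type) [Fintype K]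
    (hK : 2 ≤ Fintype.card K) (u : ℕ → InfoStruct K) (ulim : InfoStruct K) :
    (∀ g : K → ℕ → ℕ → ℝ, IsPayoff g →
        Filter.Tendsto (fun n => val (u n) g) Filter.atTop (nhds (val ulim g)))
      ↔ Filter.Tendsto (fun n => dVal (u n) ulim) Filter.atTop (nhds 0) := by
  constructor
  · intro h
    rw [Metric.tendsto_nhds]
    intro e he
    filter_upwards [uniform u ulim h (show 0 < e / 8 by linarith)] with n hn
    have h0 : 0 ≤ dVal (u n) ulim := Real.iSup_nonneg fun _ => abs_nonneg _
    have h1 : dVal (u n) ulim ≤ 7 * (e / 8) :=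
      Real.iSup_le (fun g => hn g.1 g.2) (by linarith)
    rw [Real.dist_eq, sub_zero, abs_of_nonneg h0]
    linarith
  · intro h g hg
    rw [tendsto_iff_dist_tendsto_zero]
    refine squeeze_zero (fun n => dist_nonneg) (fun n => ?_) h
    rw [Real.dist_eq]
    refine le_ciSup (f := fun g : {g : K → ℕ → ℕ → ℝ // IsPayoff g} =>
      |val (u n) g.1 - val ulim g.1|) ⟨2, ?_⟩ ⟨g, hg⟩
    rintro _ ⟨g', rfl⟩
    have h1 := abs_le.1 (abs_val_le (u n) g'.2.bd)
    have h2 := abs_le.1 (abs_val_le ulim g'.2.bd)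
    exact abs_le.2 ⟨by linarith, by linarith⟩

end ValueDistance
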